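/- arXiv:2008.00788 — 3 statements merged into one kernel-verified Lean document; each statement's English description precedes it below -/
import Mathlib

section
/- Let u be continuous on Σ_N^+ with finite energy (u ∈ dom E), and for m ≥ 0 let u_m = Σ_{p ∈ V_m} u(p) χ_p^m. Then E(u, u_m) = E_{H_m}(u_m|_{V_m}). -/
open Filter Topology MeasureTheory Finset Classical

noncomputable section

/-- The one-sided full shift space `Σ_N^+` on `N` symbols; coordinates are indexed
from `0`, so the paper's `x_1 x_2 ⋯` is `x 0, x 1, ⋯` here. It carries the product
of the discrete topology on `Fin N`. -/
abbrev SSp (N : ℕ) : Type := ℕ → Fin N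

/-- The level-`m` vertex set `V_m = {p : p_i = p_{i+1} for all i ≥ m+1}` (1-based),
i.e. the sequences that are constant from (0-based) coordinate `m` on.  It is
realized as a `Finset` via the parametrization by the first `m+1` coordinates;
see `mem_V` for the defining property. -/
noncomputable def V (N m : ℕ) : Finset (SSp N) :=
  (Finset.univ : Finset (Fin (m + 1) → Fin N)).image
    (fun w j => w ⟨min j m, by omega⟩)

lemma const_from (N m : ℕ) (p : SSp N) (h : ∀ i, m ≤ i → p i = p (i + 1)) :
    ∀ j, m ≤ j → p j = p m := by
  intro j hj
  induction j with
  | zero => have : m = 0 := by omega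
            simp [this]
  | succ k ih =>
      rcases Nat.lt_or_ge k m with hk | hk
      · have : m = k + 1 := by omega
        simp [this]
      · rw [← h k hk]
        exact ih hk

/-- Membership in `V N m` is exactly the paper's condition
`p_i = p_{i+1}` for all `i ≥ m+1` (1-based), i.e. `p i = p (i+1)` for all `i ≥ m`. -/
lemma mem_V {N m : ℕ} {p : SSp N} :
    p ∈ V N m ↔ ∀ i, m ≤ i → p i = p (i + 1) := by
  classical
  constructor
  · intro hp i hi
    simp only [V, Finset.mem_image] at hp
    obtain ⟨w, -, rfl⟩ := hp
    have h1 : min i m = m := by omega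
    have h2 : min (i + 1) m = m := by omega
    simp [h1, h2]
  · intro h
    simp only [V, Finset.mem_image]
    refine ⟨fun j => p j, Finset.mem_univ _, ?_⟩
    funext j
    rcases Nat.lt_or_ge j m with hj | hj
    · have : min j m = j := by omega
      simp [this]
    · have : min j m = m := by omega
      simp only [this]
      exact (const_from N m p h j hj).symm

/-- The deleted neighbourhood `U_{p,m} = {q ∈ V_m : q ≠ p, q_i = p_i for 1 ≤ i ≤ m}`
(1-based), i.e. `q` agrees with `p` on the first `m` (0-based: `i < m`) coordinates. -/
noncomputable def U (N m : ℕ) (p : SSp N) : Finset (SSp N) :=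
  (V N m).filter (fun q => q ≠ p ∧ ∀ i, i < m → q i = p i)

/-- `κ_p = min {j : p ∈ V_j}`. -/
noncomputable def kappa (N : ℕ) (p : SSp N) : ℕ := sInf {j | p ∈ V N j}

/-- The difference operator
`H_m u (p) = Σ_{i = κ_p}^{m} Σ_{q ∈ U_{p,i}} (u(q) − u(p))`. -/
noncomputable def H (N m : ℕ) (u : SSp N → ℝ) (p : SSp N) : ℝ :=
  ∑ i ∈ Finset.Icc (kappa N p) m, ∑ q ∈ U N i p, (u q - u p)

/-- The Dirichlet form `E_{H_m}(u, v) = − Σ_{p ∈ V_m} u(p) · H_m v(p)`. -/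
noncomputable def EH (N m : ℕ) (u v : SSp N → ℝ) : ℝ :=
  -∑ p ∈ V N m, u p * H N m v p

/-- The cylinder set `[p_1 ⋯ p_m]`, determined by the first `m` coordinates of `p`. -/
def cyl (N m : ℕ) (p : SSp N) : Set (SSp N) := {x | ∀ i, i < m → x i = p i}

/-- `χ_p^m` : the indicator function of the cylinder set `[p_1 ⋯ p_{m+1}]`. -/
noncomputable def chi (N m : ℕ) (p : SSp N) : SSp N → ℝ :=
  (cyl N (m + 1) p).indicator 1

/-- `u ∈ dom E`: `u` is continuous and the energy
`E(u) = lim_m E_{H_m}(u|_{V_m})` exists (and is finite). -/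
def MemDomE (N : ℕ) (u : SSp N → ℝ) : Prop :=
  Continuous u ∧ ∃ L : ℝ, Tendsto (fun m => EH N m u u) atTop (nhds L)

/-- `v ∈ dom_M E`: `v` has finite energy and vanishes on the boundary `V_M`. -/
def MemDomME (N M : ℕ) (v : SSp N → ℝ) : Prop :=
  MemDomE N v ∧ ∀ p ∈ V N M, v p = 0

/-- `u ∈ 𝒟_M` with `Δ u = f` (strong formulation with boundary `V_M`):
`u` and `f` are continuous and
`lim_{m → ∞} max_{p ∈ V_m ∖ V_M} |N^{m+1} H_m u(p) − f(p)| = 0`. -/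
def IsLaplacianOn (N M : ℕ) (u f : SSp N → ℝ) : Prop :=
  Continuous u ∧ Continuous f ∧
    ∀ ε : ℝ, 0 < ε → ∃ m₀ : ℕ, ∀ m, m₀ ≤ m → ∀ p ∈ V N m, p ∉ V N M →
      |(N : ℝ) ^ (m + 1) * H N m u p - f p| < ε

/-- `u ∈ D_μ` with `Δ u = f` (original definition of the Laplacian):
`u` and `f` are continuous and
`lim_{m → ∞} max_{p ∈ V_m ∖ V_{m−1}} |N^{m+1} H_m u(p) − f(p)| = 0`
(the level is written `m+1` to avoid natural subtraction). -/
def IsLaplacianDmu (N : ℕ) (u f : SSp N → ℝ) : Prop :=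
  Continuous u ∧ Continuous f ∧
    ∀ ε : ℝ, 0 < ε → ∃ m₀ : ℕ, ∀ m, m₀ ≤ m → ∀ p ∈ V N (m + 1), p ∉ V N m →
      |(N : ℝ) ^ (m + 2) * H N (m + 1) u p - f p| < ε

/-- `μ` is the equidistributed Bernoulli measure:
`μ([p_1 ⋯ p_m]) = N^{−m}` for every cylinder set. -/
def IsBernoulli (N : ℕ) (μ : Measure (SSp N)) : Prop :=
  ∀ (m : ℕ) (p : SSp N), μ (cyl N m p) = (N : ENNReal)⁻¹ ^ m

/-- `ρ(x,y) = min {i : x_i ≠ y_i}` (1-based; `0`-based first disagreement plus one). -/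
noncomputable def rho (N : ℕ) (x y : SSp N) : ℕ := sInf {i | x i ≠ y i} + 1

/-- The matrix `(G_m)_{pq}`: `2/N` if `q = p`, `1/N` if `q ∈ U_{p,m}`, `0` otherwise. -/
noncomputable def Gmat (N m : ℕ) (p q : SSp N) : ℝ :=
  if q = p then 2 / N else if q ∈ U N m p then 1 / N else 0

/-- The Green's function
`g(x,y) = Σ_{m=1}^{ρ(x,y)−1} Σ_{r,s ∈ V_m ∖ V_{m−1}} (G_m)_{rs} χ_r^m(x) χ_s^m(y)`
for `ρ(x,y) > 1`, and `g(x,y) = 0` for `ρ(x,y) = 1` (the sum is then empty). -/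
noncomputable def greenFn (N : ℕ) (x y : SSp N) : ℝ :=
  ∑ m ∈ Finset.Icc 1 (rho N x y - 1),
    ∑ r ∈ (V N m).filter (fun r => r ∉ V N (m - 1)),
      ∑ s ∈ (V N m).filter (fun s => s ∉ V N (m - 1)),
        Gmat N m r s * chi N m r x * chi N m s y

/-- The Green's operator `G_μ f (x) = ∫_{Σ_N^+ ∖ {x}} g(x,y) f(y) dμ(y)`. -/
noncomputable def Gop (N : ℕ) (μ : Measure (SSp N)) (f : SSp N → ℝ) (x : SSp N) : ℝ :=
  ∫ y in ({x}ᶜ : Set (SSp N)), greenFn N x y * f y ∂μ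


lemma V_subset_V (N : ℕ) {m n : ℕ} (h : m ≤ n) : V N m ⊆ V N n :=
  fun _ hp => mem_V.2 fun i hi => mem_V.1 hp i (h.trans hi)

lemma eq_of_mem_V {N m : ℕ} {p q : SSp N} (hp : p ∈ V N m) (hq : q ∈ V N m)
    (h : ∀ i, i < m + 1 → p i = q i) : p = q := by
  funext j
  rcases Nat.lt_or_ge j (m + 1) with hj | hj
  · exact h j hj
  · rw [const_from N m p (mem_V.1 hp) j (by omega), const_from N m q (mem_V.1 hq) j (by omega)]
    exact h m (by omega)

lemma lt_kappa {N m n : ℕ} {p : SSp N} (hn : p ∈ V N n) (hm : p ∉ V N m) : m < kappa N p := by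
  by_contra! h
  have hmem : p ∈ V N (kappa N p) := Nat.sInf_mem (s := {j | p ∈ V N j}) ⟨n, hn⟩
  exact hm (V_subset_V N h hmem)

/-- The simple function `Σ_{p ∈ V_m} u(p) χ_p^m` interpolates `u` on `V_m`. -/
lemma sum_mul_chi_of_mem_V {N m : ℕ} (u : SSp N → ℝ) {q : SSp N} (hq : q ∈ V N m) :
    ∑ p ∈ V N m, u p * chi N m p q = u q := by
  rw [Finset.sum_eq_single_of_mem q hq]
  · simp [chi, cyl]
  · intro p hp hpq
    have : q ∉ cyl N (m + 1) p := fun h => hpq (eq_of_mem_V hq hp h).symm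
    simp [chi, this]

lemma chi_congr {N m : ℕ} (p : SSp N) {x y : SSp N} (h : ∀ i, i < m + 1 → x i = y i) :
    chi N m p x = chi N m p y := by
  have : x ∈ cyl N (m + 1) p ↔ y ∈ cyl N (m + 1) p :=
    forall₂_congr fun i hi => by rw [h i hi]
  simp only [chi, Set.indicator, this, Pi.one_apply]

/-- If `v` depends only on the first `m + 1` coordinates, then `H_n v = H_m v` for `n ≥ m`. -/
lemma H_eq_of_le {N m n : ℕ} (hmn : m ≤ n) {v : SSp N → ℝ}
    (hv : ∀ x y : SSp N, (∀ i, i < m + 1 → x i = y i) → v x = v y) (p : SSp N) :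
    H N n v p = H N m v p := by
  refine (Finset.sum_subset (Finset.Icc_subset_Icc_right hmn) fun i hi him => ?_).symm
  have hmi : m < i := by
    simp only [Finset.mem_Icc] at hi him
    omega
  refine Finset.sum_eq_zero fun q hq => sub_eq_zero.2 (hv q p fun j hj => ?_)
  exact (Finset.mem_filter.1 hq).2.2 j (by omega)

lemma H_eq_zero {N m n : ℕ} (v : SSp N → ℝ) {p : SSp N} (hn : p ∈ V N n) (hm : p ∉ V N m) :
    H N m v p = 0 := by
  rw [H, Finset.Icc_eq_empty (not_le.2 (lt_kappa hn hm)), Finset.sum_empty]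

/-- If `v` depends only on the first `m + 1` coordinates, then `E_{H_n}(u, v) = E_{H_m}(u, v)`
for `n ≥ m`. -/
lemma EH_eq_of_le {N m n : ℕ} (hmn : m ≤ n) (u : SSp N → ℝ) {v : SSp N → ℝ}
    (hv : ∀ x y : SSp N, (∀ i, i < m + 1 → x i = y i) → v x = v y) :
    EH N n u v = EH N m u v := by
  simp only [EH, H_eq_of_le hmn hv]
  rw [Finset.sum_subset (V_subset_V N hmn) fun p hn hm => by rw [H_eq_zero v hn hm, mul_zero]]

/-- For `u ∈ dom E` and `u_m = Σ_{p ∈ V_m} u(p) χ_p^m`,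
one has `E(u, u_m) = E_{H_m}(u_m)`. -/
theorem statement3 (N : ℕ) (hN : 2 ≤ N) (u : SSp N → ℝ) (hu : MemDomE N u) (m : ℕ) :
    Tendsto (fun n => EH N n u (fun x => ∑ p ∈ V N m, u p * chi N m p x)) atTop
      (nhds (EH N m (fun x => ∑ p ∈ V N m, u p * chi N m p x)
                    (fun x => ∑ p ∈ V N m, u p * chi N m p x))) := by
  refine tendsto_const_nhds.congr' ?_
  filter_upwards [eventually_ge_atTop m] with n hn
  rw [EH_eq_of_le hn u fun x y h => Finset.sum_congr rfl fun p _ => by rw [chi_congr p h]]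
  unfold EH
  exact congrArg _ (Finset.sum_congr rfl fun p hp => by simp only [sum_mul_chi_of_mem_V u hp])
end
end

section
/- Let M ≥ 0, m ≥ M+1, p ∈ V_m ∖ V_M, and let u : Σ_N^+ → ℝ be continuous. Then E(u, χ_p^m) = −H_m u(p), where H_m u(p) is computed from the restriction of u to V_m. -/
open Filter Topology MeasureTheory Finset Classical

noncomputable section

lemma V_mono (N : ℕ) : Monotone (V N) := by
  intro i j hij x hx
  rw [mem_V] at hx ⊢
  exact fun k hk => hx k (hij.trans hk)

lemma mem_U {N i : ℕ} {x y : SSp N} :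
    y ∈ U N i x ↔ y ∈ V N i ∧ y ≠ x ∧ ∀ k, k < i → y k = x k := by
  simp [U]

lemma kappa_le_iff {N n i : ℕ} {x : SSp N} (hx : x ∈ V N n) :
    kappa N x ≤ i ↔ x ∈ V N i := by
  have hmem : x ∈ V N (kappa N x) := Nat.sInf_mem (s := {j | x ∈ V N j}) ⟨n, hx⟩
  exact ⟨fun h => V_mono N h hmem, fun h => Nat.sInf_le h⟩

/-- `H_n` as a sum over all levels `i ≤ n`, each level contributing at the points of `V_i`. -/
lemma H_eq_sum_range {N n : ℕ} (v : SSp N → ℝ) {x : SSp N} (hx : x ∈ V N n) :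
    H N n v x =
      ∑ i ∈ range (n + 1), if x ∈ V N i then ∑ y ∈ U N i x, (v y - v x) else 0 := by
  rw [H, ← Finset.sum_filter]
  congr 1
  ext i
  simp only [Finset.mem_Icc, Finset.mem_filter, Finset.mem_range, kappa_le_iff hx,
    Nat.lt_succ_iff, and_comm]

/-- The Dirichlet form decomposes into the contributions of the levels `i ≤ n`. -/
lemma EH_eq_sum_levels (N n : ℕ) (u v : SSp N → ℝ) :
    EH N n u v =
      -∑ i ∈ range (n + 1), ∑ x ∈ V N i, ∑ y ∈ U N i x, u x * (v y - v x) := by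
  rw [EH, Finset.sum_congr rfl fun x hx => by rw [H_eq_sum_range v hx, Finset.mul_sum],
    Finset.sum_comm]
  congr 1
  refine Finset.sum_congr rfl fun i hi => ?_
  have hsub : V N i ⊆ V N n := V_mono N (by simpa [Nat.lt_succ_iff] using hi)
  simp only [mul_ite, mul_zero, Finset.mul_sum]
  rw [← Finset.sum_filter, Finset.filter_mem_eq_inter, Finset.inter_eq_right.mpr hsub]

/-- The neighbour relation `y ∈ U_{x,i}` on `V_i` is symmetric. -/
lemma sum_U_swap (N i : ℕ) (f : SSp N → SSp N → ℝ) :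
    ∑ x ∈ V N i, ∑ y ∈ U N i x, f x y = ∑ x ∈ V N i, ∑ y ∈ U N i x, f y x := by
  refine Finset.sum_comm' fun x y => ?_
  simp only [mem_U]
  exact ⟨fun ⟨hx, hy, hne, h⟩ => ⟨⟨hx, hne.symm, fun k hk => (h k hk).symm⟩, hy⟩,
    fun ⟨⟨hx, hne, h⟩, hy⟩ => ⟨hx, hy, hne.symm, fun k hk => (h k hk).symm⟩⟩

/-- Summation by parts on a single level. -/
lemma sum_level_by_parts (N i : ℕ) (u v : SSp N → ℝ) :
    ∑ x ∈ V N i, ∑ y ∈ U N i x, u x * (v y - v x) =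
      ∑ x ∈ V N i, v x * ∑ y ∈ U N i x, (u y - u x) := by
  have h := sum_U_swap N i fun x y => u x * v y
  simp only [Finset.mul_sum, mul_sub, Finset.sum_sub_distrib] at h ⊢
  rw [h]
  simp only [mul_comm]

/-- The only point of `V_m` in the cylinder of length `m + 1` around `p ∈ V_m` is `p`. -/
lemma chi_eq_ite_of_mem_V {N m : ℕ} {p x : SSp N} (hp : p ∈ V N m) (hx : x ∈ V N m) :
    chi N m p x = if x = p then 1 else 0 := by
  rw [chi, Set.indicator_apply, Pi.one_apply]
  refine if_congr ⟨fun h => funext fun k => ?_, fun h => h ▸ fun _ _ => rfl⟩ rfl rfl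
  rcases Nat.lt_or_ge k (m + 1) with hk | hk
  · exact h k hk
  · rw [const_from N m x (mem_V.mp hx) k (by omega), const_from N m p (mem_V.mp hp) k (by omega)]
    exact h m (by omega)

/-- `χ_p^m` does not distinguish neighbours of level `i > m`. -/
lemma chi_eq_of_mem_U {N m i : ℕ} (hi : m < i) (p : SSp N) {x y : SSp N} (hy : y ∈ U N i x) :
    chi N m p y = chi N m p x := by
  have h := (mem_U.mp hy).2.2
  rw [chi, Set.indicator_apply, Set.indicator_apply]
  refine if_congr (forall₂_congr fun k hk => ?_) rfl rfl
  rw [h k (by omega)]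

/-- The energies `E_{H_n}(u, χ_p^m)` are constant for `n ≥ m`. -/
lemma EH_chi {N m n : ℕ} (hmn : m ≤ n) {p : SSp N} (hp : p ∈ V N m) (u : SSp N → ℝ) :
    EH N n u (chi N m p) = -(H N m u p) := by
  rw [EH_eq_sum_levels, H_eq_sum_range u hp, neg_inj]
  symm
  refine Finset.sum_subset_zero_on_sdiff (Finset.range_mono (by omega)) (fun i hi => ?_)
    fun i hi => ?_
  · have hmi : m < i := by
      simp only [Finset.mem_sdiff, Finset.mem_range] at hi
      omega
    refine Finset.sum_eq_zero fun x _ => Finset.sum_eq_zero fun y hy => ?_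
    rw [chi_eq_of_mem_U hmi p hy, sub_self, mul_zero]
  · have him : i ≤ m := by simpa [Nat.lt_succ_iff] using hi
    calc (if p ∈ V N i then ∑ y ∈ U N i p, (u y - u p) else 0)
        = ∑ x ∈ V N i, (if x = p then 1 else 0) * ∑ y ∈ U N i x, (u y - u x) := by
          simp only [ite_mul, one_mul, zero_mul, Finset.sum_ite_eq']
      _ = ∑ x ∈ V N i, chi N m p x * ∑ y ∈ U N i x, (u y - u x) :=
          Finset.sum_congr rfl fun x hx => by rw [chi_eq_ite_of_mem_V hp (V_mono N him hx)]
      _ = ∑ x ∈ V N i, ∑ y ∈ U N i x, u x * (chi N m p y - chi N m p x) :=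
          (sum_level_by_parts N i u _).symm

/-- For `M ≥ 0`, `m ≥ M+1`, `p ∈ V_m ∖ V_M` and continuous `u`,
`E(u, χ_p^m) = −H_m u(p)`. -/
theorem statement6 (N : ℕ) (hN : 2 ≤ N) (M m : ℕ) (hm : M + 1 ≤ m)
    (p : SSp N) (hp : p ∈ V N m) (hpM : p ∉ V N M)
    (u : SSp N → ℝ) (hu : Continuous u) :
    Tendsto (fun n => EH N n u (chi N m p)) atTop (nhds (-(H N m u p))) := by
  exact tendsto_const_nhds.congr'
    ((eventually_ge_atTop m).mono fun n hn => (EH_chi hn hp u).symm)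
end
end

section
/- Dirichlet boundary value problem: For every continuous f : Σ_N^+ → ℝ and every ζ : V_0 → ℝ there exists u ∈ D_0 such that Δu = f and u(p) = ζ(p) for all p ∈ V_0. Moreover, the solution is unique up to harmonic functions vanishing on V_0: if u_1, u_2 are two such solutions, then h = u_1 − u_2 satisfies Δh = 0 and h|_{V_0} = 0. -/
open Filter Topology MeasureTheory Finset Classical

noncomputable section

/-- The sequence that follows `x` on the first `m` coordinates and is constantly `s` afterwards. -/
def graft {N : ℕ} (x : SSp N) (m : ℕ) (s : Fin N) : SSp N := fun j => if j < m then x j else s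

lemma graft_of_lt {N : ℕ} (x : SSp N) {m j : ℕ} (s : Fin N) (h : j < m) :
    graft x m s j = x j := if_pos h

lemma graft_of_le {N : ℕ} (x : SSp N) {m j : ℕ} (s : Fin N) (h : m ≤ j) :
    graft x m s j = s := if_neg (by omega)

lemma graft_mem_V {N : ℕ} (x : SSp N) (m : ℕ) (s : Fin N) : graft x m s ∈ V N m :=
  mem_V.2 fun i hi => by rw [graft_of_le x s hi, graft_of_le x s (by omega)]

lemma graft_self_of_mem_V {N m : ℕ} {p : SSp N} (hp : p ∈ V N m) : graft p m (p m) = p := by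
  funext j
  rcases Nat.lt_or_ge j m with hj | hj
  · exact graft_of_lt p _ hj
  · rw [graft_of_le p _ hj, const_from N m p (mem_V.1 hp) j hj]

lemma V_mono_s10 {N m n : ℕ} (h : m ≤ n) : V N m ⊆ V N n := fun _ hp =>
  mem_V.2 fun i hi => mem_V.1 hp i (h.trans hi)

lemma mem_V_kappa {N m : ℕ} {p : SSp N} (hp : p ∈ V N m) : p ∈ V N (kappa N p) :=
  Nat.sInf_mem (s := {j | p ∈ V N j}) ⟨m, hp⟩

lemma kappa_le {N m : ℕ} {p : SSp N} (hp : p ∈ V N m) : kappa N p ≤ m :=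
  Nat.sInf_le (s := {j | p ∈ V N j}) hp

lemma apply_ne_of_kappa_eq_succ {N k : ℕ} {p : SSp N} (hp : p ∈ V N (k + 1))
    (hk : kappa N p = k + 1) : p (k + 1) ≠ p k := by
  intro h
  have hmem : p ∈ V N k := mem_V.2 fun i hi => by
    rcases hi.eq_or_lt with rfl | hi
    · exact h.symm
    · exact mem_V.1 hp i hi
  have := kappa_le hmem
  omega

lemma sum_U_sub {N : ℕ} (i : ℕ) (p : SSp N) (u : SSp N → ℝ) :
    ∑ q ∈ U N i p, (u q - u p) = ∑ s, (u (graft p i s) - u p) := by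
  have hinj : Function.Injective (graft p i) := fun s t h => by
    have := congrFun h i
    rwa [graft_of_le p s le_rfl, graft_of_le p t le_rfl] at this
  have himage : U N i p = (univ.image (graft p i)).erase p := by
    ext q
    simp only [U, Finset.mem_filter, Finset.mem_erase, Finset.mem_image, Finset.mem_univ, true_and]
    constructor
    · rintro ⟨hq, hne, hagree⟩
      refine ⟨hne, q i, ?_⟩
      rw [← graft_self_of_mem_V hq]
      funext j
      rcases Nat.lt_or_ge j i with hj | hj
      · rw [graft_of_lt _ _ hj, graft_of_lt _ _ hj, hagree j hj]
      · rw [graft_of_le _ _ hj, graft_of_le _ _ hj, graft_of_le _ _ le_rfl]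
    · rintro ⟨hne, s, rfl⟩
      exact ⟨graft_mem_V p i s, hne, fun j hj => graft_of_lt p s hj⟩
  rw [himage, Finset.sum_erase (f := fun q => u q - u p) _ (sub_self (u p)), Finset.sum_image hinj.injOn]

lemma H_sub (N m : ℕ) (u v : SSp N → ℝ) (p : SSp N) :
    H N m (fun x => u x - v x) p = H N m u p - H N m v p := by
  simp only [H, ← Finset.sum_sub_distrib]
  exact Finset.sum_congr rfl fun i _ => Finset.sum_congr rfl fun q _ => by ring

lemma mem_cyl_self {N m : ℕ} (x : SSp N) : x ∈ cyl N m x := fun _ _ => rfl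

lemma cyl_eq_pi {N m : ℕ} (x : SSp N) :
    cyl N m x = Set.pi (Finset.range m) fun i => {x i} := by
  ext y
  simp [cyl, Set.mem_pi]

lemma isOpen_cyl {N m : ℕ} (x : SSp N) : IsOpen (cyl N m x) := by
  rw [cyl_eq_pi]
  exact isOpen_set_pi (Finset.finite_toSet _) fun _ _ => isOpen_discrete _

lemma cyl_congr {N m : ℕ} {x y : SSp N} (h : ∀ i, i < m → x i = y i) :
    cyl N m x = cyl N m y := by
  ext z
  exact forall₂_congr fun i hi => by rw [h i hi]

lemma exists_cyl_subset {N : ℕ} {x : SSp N} {s : Set (SSp N)} (hs : s ∈ 𝓝 x) :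
    ∃ m, cyl N m x ⊆ s := by
  obtain ⟨t, ⟨y, n, rfl⟩, hxt, hts⟩ :=
    (PiNat.isTopologicalBasis_cylinders (fun _ : ℕ => Fin N)).mem_nhds_iff.1 hs
  exact ⟨n, fun z hz => hts fun i hi => (hz i hi).trans (hxt i hi)⟩

lemma continuous_of_cyl {N m : ℕ} {g : SSp N → ℝ}
    (hg : ∀ x y : SSp N, (∀ i, i < m → x i = y i) → g x = g y) : Continuous g :=
  continuous_iff_continuousAt.2 fun x =>
    (continuousAt_const (y := g x)).congr <| by
      filter_upwards [(isOpen_cyl (m := m) x).mem_nhds (mem_cyl_self x)] with y hy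
      exact (hg y x hy).symm

/-- Uniform continuity on the shift space in terms of cylinders. -/
lemma exists_cyl_abs_sub_lt {N : ℕ} {f : SSp N → ℝ} (hf : Continuous f) {ε : ℝ} (hε : 0 < ε) :
    ∃ m₀, ∀ x, ∀ y ∈ cyl N m₀ x, |f y - f x| < ε := by
  have hloc : ∀ x : SSp N, ∃ m, ∀ y ∈ cyl N m x, |f y - f x| < ε / 2 := fun x =>
    exists_cyl_subset (Metric.continuousAt_iff'.1 hf.continuousAt (ε / 2) (half_pos hε))
  choose n hn using hloc
  obtain ⟨t, ht⟩ := CompactSpace.elim_nhds_subcover (fun x => cyl N (n x) x)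
    fun x => (isOpen_cyl x).mem_nhds (mem_cyl_self x)
  refine ⟨t.sup n, fun x y hy => ?_⟩
  obtain ⟨z, hzt, hxz⟩ := Set.mem_iUnion₂.1 (ht.ge (Set.mem_univ x))
  have hyz : y ∈ cyl N (n z) z := fun i hi =>
    (hy i (hi.trans_le (Finset.le_sup hzt))).trans (hxz i hi)
  have h₁ := abs_lt.1 (hn z x hxz)
  have h₂ := abs_lt.1 (hn z y hyz)
  exact abs_lt.2 ⟨by linarith, by linarith⟩

lemma exists_isBernoulli (N : ℕ) [NeZero N] :
    ∃ μ : Measure (SSp N), IsProbabilityMeasure μ ∧ IsBernoulli N μ := by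
  refine ⟨Measure.infinitePi fun _ => (PMF.uniformOfFintype (Fin N)).toMeasure, inferInstance,
    fun m p => ?_⟩
  rw [cyl_eq_pi, Measure.infinitePi_pi _ fun i _ => measurableSet_singleton _]
  simp

/-- The integral of `f` over the cylinder of length `m` around `x`. -/
def cylIntegral (N : ℕ) (μ : Measure (SSp N)) (f : SSp N → ℝ) (m : ℕ) (x : SSp N) : ℝ :=
  ∫ y in cyl N m x, f y ∂μ

section CylIntegral

variable {N : ℕ} {μ : Measure (SSp N)} {f : SSp N → ℝ}

lemma cylIntegral_congr {m : ℕ} {x y : SSp N} (h : ∀ i, i < m → x i = y i) :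
    cylIntegral N μ f m x = cylIntegral N μ f m y := by
  rw [cylIntegral, cylIntegral, cyl_congr h]

lemma integrable_of_continuous [IsProbabilityMeasure μ] (hf : Continuous f) : Integrable f μ := by
  simpa using hf.continuousOn.integrableOn_compact (μ := μ) isCompact_univ

lemma sum_cylIntegral_graft [IsProbabilityMeasure μ] (hf : Continuous f) (m : ℕ) (x : SSp N) :
    ∑ s, cylIntegral N μ f (m + 1) (graft x m s) = cylIntegral N μ f m x := by
  have hunion : cyl N m x = ⋃ s, cyl N (m + 1) (graft x m s) := by
    ext y
    simp only [Set.mem_iUnion]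
    constructor
    · intro hy
      refine ⟨y m, fun i hi => ?_⟩
      rcases (Nat.lt_succ_iff.1 hi).eq_or_lt with rfl | hi
      · rw [graft_of_le _ _ le_rfl]
      · rw [graft_of_lt _ _ hi, hy i hi]
    · rintro ⟨s, hy⟩ i hi
      rw [hy i (by omega), graft_of_lt _ _ hi]
  simp only [cylIntegral]
  rw [hunion, integral_iUnion_fintype (fun s => (isOpen_cyl _).measurableSet) ?_
    fun s => (integrable_of_continuous hf).integrableOn]
  intro s t hst
  refine Set.disjoint_left.2 fun y hs ht => hst ?_
  have h₁ := hs m (by omega)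
  have h₂ := ht m (by omega)
  rw [graft_of_le _ _ le_rfl] at h₁ h₂
  exact h₁.symm.trans h₂

lemma IsBernoulli.real_cyl (hμ : IsBernoulli N μ) (m : ℕ) (x : SSp N) :
    μ.real (cyl N m x) = ((N : ℝ)⁻¹) ^ m := by
  simp [Measure.real, hμ m x]

lemma abs_cylIntegral_le [IsProbabilityMeasure μ] (hμ : IsBernoulli N μ) {C : ℝ} {m : ℕ}
    {x : SSp N} (hC : ∀ y ∈ cyl N m x, |f y| ≤ C) :
    |cylIntegral N μ f m x| ≤ C * ((N : ℝ)⁻¹) ^ m := by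
  rw [← hμ.real_cyl m x]
  exact norm_setIntegral_le_of_norm_le_const (f := f) (measure_lt_top μ (cyl N m x)) hC

lemma abs_mul_cylIntegral_sub_le [NeZero N] [IsProbabilityMeasure μ] (hμ : IsBernoulli N μ)
    (hf : Continuous f) {ε : ℝ} {m : ℕ} {x : SSp N} (hε : ∀ y ∈ cyl N m x, |f y - f x| ≤ ε) :
    |(N : ℝ) ^ m * cylIntegral N μ f m x - f x| ≤ ε := by
  have hN : (0 : ℝ) < (N : ℝ) ^ m := pow_pos (Nat.cast_pos.2 (NeZero.pos N)) m
  have hsub : cylIntegral N μ (fun y => f y - f x) m x =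
      cylIntegral N μ f m x - ((N : ℝ)⁻¹) ^ m * f x := by
    simp only [cylIntegral]
    rw [integral_sub (integrable_of_continuous hf).integrableOn (integrable_const _).integrableOn,
      setIntegral_const, hμ.real_cyl, smul_eq_mul]
  have hle := abs_cylIntegral_le (f := fun y => f y - f x) hμ hε
  rw [hsub, inv_pow] at hle
  calc |(N : ℝ) ^ m * cylIntegral N μ f m x - f x|
      = (N : ℝ) ^ m * |cylIntegral N μ f m x - ((N : ℝ) ^ m)⁻¹ * f x| := by
        rw [← abs_of_pos hN, ← abs_mul, abs_of_pos hN, mul_sub, mul_inv_cancel_left₀ hN.ne']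
    _ ≤ (N : ℝ) ^ m * (ε * ((N : ℝ) ^ m)⁻¹) := by gcongr
    _ = ε := by field_simp

end CylIntegral

/-- The increment at coordinate `n + 1` of the solution with prescribed cylinder masses `F`. -/
def increment (N : ℕ) (F : ℕ → SSp N → ℝ) (n : ℕ) (x : SSp N) : ℝ :=
  if x (n + 1) = x n then 0
  else -(F (n + 2) x + (F (n + 1) x - F (n + 2) (graft x (n + 1) (x n)))) / N

/-- The solution of the Dirichlet problem with boundary values `ζ` and cylinder masses `F`. -/
def potential (N : ℕ) (F : ℕ → SSp N → ℝ) (ζ : SSp N → ℝ) (x : SSp N) : ℝ :=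
  ζ (fun _ => x 0) + ∑' n, increment N F n x

section Potential

variable {N : ℕ} {F : ℕ → SSp N → ℝ} {ζ : SSp N → ℝ}

lemma graft_congr {x y : SSp N} {m : ℕ} (h : ∀ i, i < m → x i = y i) (s : Fin N) :
    graft x m s = graft y m s := by
  funext j
  simp only [graft]
  split_ifs with hj
  exacts [h j hj, rfl]

lemma increment_congr (hF : ∀ m x y, (∀ i, i < m → x i = y i) → F m x = F m y) {n : ℕ}
    {x y : SSp N} (h : ∀ i, i < n + 2 → x i = y i) : increment N F n x = increment N F n y := by
  rw [increment, increment, h n (by omega), h (n + 1) (by omega), hF (n + 2) x y h,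
    hF (n + 1) x y fun i hi => h i (by omega), graft_congr fun i hi => h i (by omega)]

lemma potential_of_mem_V_zero {p : SSp N} (hp : p ∈ V N 0) : potential N F ζ p = ζ p := by
  have hzero : ∀ n, increment N F n p = 0 := fun n =>
    if_pos (mem_V.1 hp n (Nat.zero_le n)).symm
  have hconst : (fun _ => p 0) = p := funext fun j =>
    (const_from N 0 p (mem_V.1 hp) j (Nat.zero_le j)).symm
  simp [potential, hzero, hconst]

lemma continuous_potential (hN : 2 ≤ N)
    (hF : ∀ m x y, (∀ i, i < m → x i = y i) → F m x = F m y) {C : ℝ}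
    (hC : ∀ m x, |F m x| ≤ C * ((N : ℝ)⁻¹) ^ m) : Continuous (potential N F ζ) := by
  have hN' : (2 : ℝ) ≤ N := by exact_mod_cast hN
  have hinv : (N : ℝ)⁻¹ < 1 := inv_lt_one_of_one_lt₀ (by linarith)
  have hinv₀ : (0 : ℝ) ≤ (N : ℝ)⁻¹ := by positivity
  have hζ : Continuous fun x : SSp N => ζ fun _ => x 0 :=
    continuous_of_cyl (m := 1) fun x y h => by rw [h 0 one_pos]
  refine hζ.add (continuous_tsum (u := fun n => 3 * C * ((N : ℝ)⁻¹) ^ n)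
    (fun n => continuous_of_cyl (m := n + 2) fun x y h => increment_congr hF h)
    ((summable_geometric_of_lt_one hinv₀ hinv).mul_left _) fun n x => ?_)
  have hC₀ : 0 ≤ C := by simpa using (abs_nonneg _).trans (hC 0 x)
  have hbound : ∀ k y, |F (n + k) y| ≤ C * ((N : ℝ)⁻¹) ^ n := fun k y =>
    (hC (n + k) y).trans <| mul_le_mul_of_nonneg_left
      (pow_le_pow_of_le_one hinv₀ hinv.le (Nat.le_add_right n k)) hC₀
  rw [Real.norm_eq_abs, increment]
  split_ifs
  · simp only [abs_zero]
    positivity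
  · rw [abs_div, Nat.abs_cast]
    refine (div_le_self (abs_nonneg _) (by linarith)).trans (abs_le.2 ?_)
    have h₁ := abs_le.1 (hbound 2 x)
    have h₂ := abs_le.1 (hbound 1 x)
    have h₃ := abs_le.1 (hbound 2 (graft x (n + 1) (x n)))
    constructor <;> linarith

lemma potential_graft (hF : ∀ m x y, (∀ i, i < m → x i = y i) → F m x = F m y) (p : SSp N)
    (n : ℕ) (s : Fin N) :
    potential N F ζ (graft p (n + 1) s) =
      ζ (fun _ => p 0) + ∑ j ∈ range n, increment N F j p +
        if s = p n then 0
        else -(F (n + 2) (graft p (n + 1) s) +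
          (F (n + 1) p - F (n + 2) (graft p (n + 1) (p n)))) / N := by
  have hagree : ∀ i, i < n + 1 → graft p (n + 1) s i = p i := fun i hi => graft_of_lt p s hi
  rw [potential, hagree 0 (by omega), tsum_eq_sum (s := range (n + 1)), Finset.sum_range_succ,
    add_assoc]
  · congr 2
    · refine Finset.sum_congr rfl fun j hj => increment_congr hF fun i hi => hagree i ?_
      have := Finset.mem_range.1 hj
      omega
    · rw [increment, hagree n (by omega), graft_of_le p s le_rfl, hF (n + 1) _ p hagree,
        graft_congr hagree]
  · intro j hj
    have hj' : n + 1 ≤ j := by simpa using hj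
    exact if_pos (by rw [graft_of_le p s hj', graft_of_le p s (by omega)])

/-- The Laplace sum of the potential over one level is a difference of cylinder masses. -/
lemma sum_U_potential (hN : N ≠ 0) (hF : ∀ m x y, (∀ i, i < m → x i = y i) → F m x = F m y)
    (hadd : ∀ m x, ∑ s, F (m + 1) (graft x m s) = F m x) {p : SSp N} {n : ℕ}
    (hp : p ∈ V N (n + 1)) :
    ∑ q ∈ U N (n + 1) p, (potential N F ζ q - potential N F ζ p) =
      if p (n + 1) = p n then F (n + 2) p - F (n + 1) p else F (n + 2) p := by
  have hN' : (N : ℝ) ≠ 0 := Nat.cast_ne_zero.2 hN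
  have hself := graft_self_of_mem_V hp
  have hpot := potential_graft (ζ := ζ) hF p n
  have hpotp := hpot (p (n + 1))
  rw [hself] at hpotp
  set T := F (n + 1) p - F (n + 2) (graft p (n + 1) (p n)) with hT
  have hsum : ∑ s, (if s = p n then 0 else -(F (n + 2) (graft p (n + 1) s) + T) / N) = -T := by
    have hsplit : ∀ s, (if s = p n then 0 else -(F (n + 2) (graft p (n + 1) s) + T) / N) =
        -(F (n + 2) (graft p (n + 1) s) + T) / N +
          if s = p n then (F (n + 2) (graft p (n + 1) (p n)) + T) / N else 0 := fun s => by
      split_ifs with h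
      · rw [h]; ring
      · ring
    rw [Finset.sum_congr rfl fun s _ => hsplit s, Finset.sum_add_distrib, ← Finset.sum_div,
      Finset.sum_neg_distrib, Finset.sum_add_distrib, hadd (n + 1) p,
      Finset.sum_ite_eq' univ (p n)]
    simp only [Finset.sum_const, Finset.card_univ, Fintype.card_fin, nsmul_eq_mul,
      Finset.mem_univ, if_true]
    field_simp
    rw [hT]
    ring
  rw [sum_U_sub]
  simp only [hpot, hpotp, add_sub_add_left_eq_sub]
  rw [Finset.sum_sub_distrib, hsum, Finset.sum_const, Finset.card_univ, Fintype.card_fin,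
    nsmul_eq_mul]
  split_ifs with h
  · rw [hT, ← h, hself]
    ring
  · field_simp
    ring

lemma H_potential (hN : N ≠ 0) (hF : ∀ m x y, (∀ i, i < m → x i = y i) → F m x = F m y)
    (hadd : ∀ m x, ∑ s, F (m + 1) (graft x m s) = F m x) {p : SSp N} {m : ℕ}
    (hp : p ∈ V N m) (hp₀ : p ∉ V N 0) : H N m (potential N F ζ) p = F (m + 1) p := by
  have hk := mem_V_kappa hp
  obtain ⟨k, hkappa⟩ : ∃ k, kappa N p = k + 1 :=
    Nat.exists_eq_succ_of_ne_zero fun h => hp₀ (h ▸ hk)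
  have hkm := kappa_le hp
  rw [hkappa] at hk hkm
  rw [H, hkappa]
  clear hp
  induction m, hkm using Nat.le_induction with
  | base =>
    rw [Finset.Icc_self, Finset.sum_singleton, sum_U_potential hN hF hadd hk,
      if_neg (apply_ne_of_kappa_eq_succ hk hkappa)]
  | succ m hm ih =>
    rw [Finset.sum_Icc_succ_top (by omega), ih, sum_U_potential hN hF hadd (V_mono_s10 (by omega) hk),
      if_pos (mem_V.1 hk m hm).symm]
    ring

end Potential

/-- Dirichlet boundary value problem: for every continuous `f` and
every `ζ : V_0 → ℝ` there is `u ∈ 𝒟_0` with `Δu = f` and `u|_{V_0} = ζ`; the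
solution is unique up to harmonic functions vanishing on `V_0`. -/
theorem statement10 (N : ℕ) (hN : 2 ≤ N) (f : SSp N → ℝ) (hf : Continuous f)
    (ζ : SSp N → ℝ) :
    (∃ u : SSp N → ℝ, IsLaplacianOn N 0 u f ∧ ∀ p ∈ V N 0, u p = ζ p) ∧
    (∀ u₁ u₂ : SSp N → ℝ,
      (IsLaplacianOn N 0 u₁ f ∧ ∀ p ∈ V N 0, u₁ p = ζ p) →
      (IsLaplacianOn N 0 u₂ f ∧ ∀ p ∈ V N 0, u₂ p = ζ p) →
      IsLaplacianOn N 0 (fun x => u₁ x - u₂ x) (fun _ => 0) ∧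
        ∀ p ∈ V N 0, u₁ p - u₂ p = 0) := by
  have : NeZero N := ⟨by omega⟩
  constructor
  · obtain ⟨μ, hprob, hμ⟩ := exists_isBernoulli N
    obtain ⟨C, hC⟩ := isCompact_univ.exists_bound_of_continuousOn hf.continuousOn
    have hcongr : ∀ m x y, (∀ i, i < m → x i = y i) →
        cylIntegral N μ f m x = cylIntegral N μ f m y := fun m x y h => cylIntegral_congr h
    refine ⟨potential N (cylIntegral N μ f) ζ, ⟨continuous_potential hN hcongr (C := C)
      fun m x => abs_cylIntegral_le hμ fun y _ => hC y (Set.mem_univ y), hf, fun ε hε => ?_⟩,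
      fun p hp => potential_of_mem_V_zero hp⟩
    obtain ⟨m₀, hm₀⟩ := exists_cyl_abs_sub_lt hf (half_pos hε)
    refine ⟨m₀, fun m hm p hp hp₀ => ?_⟩
    rw [H_potential (NeZero.ne N) hcongr (sum_cylIntegral_graft hf) hp hp₀]
    refine (abs_mul_cylIntegral_sub_le hμ hf fun y hy => ?_).trans_lt (half_lt_self hε)
    exact (hm₀ p y fun i hi => hy i (by omega)).le
  · rintro u₁ u₂ ⟨⟨hc₁, -, h₁⟩, hb₁⟩ ⟨⟨hc₂, -, h₂⟩, hb₂⟩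
    refine ⟨⟨hc₁.sub hc₂, continuous_const, fun ε hε => ?_⟩,
      fun p hp => by rw [hb₁ p hp, hb₂ p hp, sub_self]⟩
    obtain ⟨m₁, hm₁⟩ := h₁ (ε / 2) (half_pos hε)
    obtain ⟨m₂, hm₂⟩ := h₂ (ε / 2) (half_pos hε)
    refine ⟨max m₁ m₂, fun m hm p hp hp₀ => ?_⟩
    have e₁ := abs_lt.1 (hm₁ m (le_of_max_le_left hm) p hp hp₀)
    have e₂ := abs_lt.1 (hm₂ m (le_of_max_le_right hm) p hp hp₀)
    rw [H_sub, sub_zero, mul_sub]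
    exact abs_lt.2 ⟨by linarith, by linarith⟩
end
end
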